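/- (Validity of the non-stationarity test / marginal conformal coverage in a C-stationary strongly non-reactive environment.) Suppose the law of the data D over trajectories has probability mass function f(d) = ∏_{t=1}^T pC(c_t) · a_t(x_t; c_t, h_{t−1}(d)) · r(y_t; c_t, x_t), where pC : 𝒞 → ℝ≥0 is the (time-invariant) context law and r : 𝒴 × 𝒞 × 𝒳 → ℝ≥0 is a response law not depending on t (the non-stationarity null H₀^S). Take f̂(d) = ∏_{t=1}^T a_t(x_t; c_t, h_{t−1}(d)), and let q be any resampling distribution each of whose draws is a permutation of the observed trajectory: q(d̃ | d) > 0 implies there exists a permutation π of {1, …, T} with d̃_t = d_{π(t)} for all t. Then for every α ∈ [0,1], the weighted MC randomization p-value is valid: Σ_{(d₀,…,d_m) : p(d₀,…,d_m) ≤ α} h(d₀,…,d_m) ≤ α. Equivalently, the conformal prediction set C^α(D) = {y ∈ 𝒴 : the p-value computed on D with its final response Y_T replaced by y exceeds α} contains the realized final response Y_T with probability at least 1 − α. -/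

import Mathlib

open scoped NNReal Classical BigOperators

noncomputable section

/-! Generic weighted MC randomization test machinery. -/

/-- The joint law of the tuple: `h(d₀, …, d_m) = f(d₀) · ∏_{k=1}^m q(d_k | d₀)`. -/
def jointLaw {D : Type*} (f : D → ℝ≥0) (q : D → D → ℝ≥0) (m : ℕ)
    (d : Fin (m + 1) → D) : ℝ≥0 :=
  f (d 0) * ∏ k ∈ Finset.univ.erase (0 : Fin (m + 1)), q (d k) (d 0)

/-- Numerator of the weight `w_i`: `f̂(d_i) · ∏_{k ≠ i} q(d_k | d_i)`. -/
def wNum {D : Type*} (q : D → D → ℝ≥0) (fhat : D → ℝ≥0) (m : ℕ)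
    (i : Fin (m + 1)) (d : Fin (m + 1) → D) : ℝ≥0 :=
  fhat (d i) * ∏ k ∈ Finset.univ.erase i, q (d k) (d i)

/-- The weight `w_i`; in `ℝ≥0` division by zero yields `0`. -/
def weight {D : Type*} (q : D → D → ℝ≥0) (fhat : D → ℝ≥0) (m : ℕ)
    (i : Fin (m + 1)) (d : Fin (m + 1) → D) : ℝ≥0 :=
  wNum q fhat m i d / ∑ j, wNum q fhat m j d

/-- The weighted MC randomization p-value. -/
def pValue {D : Type*} (q : D → D → ℝ≥0) (fhat : D → ℝ≥0) (m : ℕ)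
    (S : D → ℝ) (d : Fin (m + 1) → D) : ℝ≥0 :=
  ∑ i, weight q fhat m i d * (if S (d 0) ≤ S (d i) then 1 else 0)

/-! Trajectory machinery. -/

variable {C X Y : Type*}

/-- Embedding of an index `s < t` into `Fin T`. -/
def emb {T : ℕ} (t : Fin T) (s : Fin (t : ℕ)) : Fin T :=
  ⟨(s : ℕ), lt_trans s.isLt t.isLt⟩

/-- The history `h_{t−1}(d)`. -/
def hist {T : ℕ} (d : Fin T → C × X × Y) (t : Fin T) : Fin (t : ℕ) → C × X × Y :=
  fun s => d (emb t s)

/-- `f̂(d) = ∏_{t=1}^T a_t(x_t; c_t, h_{t−1}(d))`. -/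
def assignLik {T : ℕ} (a : (t : Fin T) → X → C → (Fin (t : ℕ) → C × X × Y) → ℝ≥0)
    (d : Fin T → C × X × Y) : ℝ≥0 :=
  ∏ t, a t (d t).2.1 (d t).1 (hist d t)

/-- The data law in a `C`-stationary strongly non-reactive environment under the
stationarity null `H₀^S`: `f(d) = ∏_t pC(c_t) · a_t(x_t; c_t, h_{t−1}(d)) ·
r(y_t; c_t, x_t)` with `pC` and `r` not depending on `t`. -/
def statTrajLaw {T : ℕ}
    (pC : C → ℝ≥0)
    (a : (t : Fin T) → X → C → (Fin (t : ℕ) → C × X × Y) → ℝ≥0)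
    (r : Y → C → X → ℝ≥0)
    (d : Fin T → C × X × Y) : ℝ≥0 :=
  ∏ t, pC (d t).1 * a t (d t).2.1 (d t).1 (hist d t) *
    r (d t).2.2 (d t).1 (d t).2.1

/-!
The joint weights `wNum q f m i d` are equivariant: relabelling the tuple `d` moves the index `i`.
Hence the probability of rejecting is the average over `i` of the probability, under the law
`wNum q f m i` in which the `i`-th entry is the observed data, that the p-value referenced to
the `i`-th entry is at most `α`. For a fixed tuple, the entries that reject carry at most a fraction
`α` of the total weight, since the rejecting entry with the smallest statistic has all of them
in its tail. Finally, `statTrajLaw` differs from `assignLik` by a factor that is invariant under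
permutations of the trajectory, so on the support of `q` it cancels from the weights.
-/

open scoped ENNReal

lemma tsum_pi_prod_eq_prod_tsum {n : ℕ} {D : Fin n → Type*} (u : ∀ k, D k → ℝ≥0∞) :
    ∑' d : ∀ k, D k, ∏ k, u k (d k) = ∏ k, ∑' e, u k e := by
  induction n with
  | zero => simp [tsum_fintype]
  | succ n ih =>
    rw [← (Fin.consEquiv D).tsum_eq, ENNReal.tsum_prod', Fin.prod_univ_succ, ← ih]
    simp only [Fin.consEquiv, Equiv.coe_fn_mk, Fin.prod_univ_succ, Fin.cons_zero, Fin.cons_succ,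
      ENNReal.tsum_mul_left, ENNReal.tsum_mul_right]

lemma tsum_coe_eq_one_of_tsum_eq_one {D : Type*} {u : D → ℝ≥0} (hu : ∑' d, u d = 1) :
    ∑' d, (u d : ℝ≥0∞) = 1 := by
  have hsum : Summable u := by
    by_contra hns
    exact zero_ne_one ((tsum_eq_zero_of_not_summable hns).symm.trans hu)
  rw [← ENNReal.coe_tsum hsum, hu, ENNReal.coe_one]

lemma tsum_sum_eq_card_mul_tsum_of_equivariant {ι D : Type*} [Fintype ι]
    (F : ι → (ι → D) → ℝ≥0∞)
    (hF : ∀ (σ : Equiv.Perm ι) (i : ι) (d : ι → D), F i (d ∘ σ) = F (σ i) d) (i : ι) :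
    ∑' d, ∑ j, F j d = Fintype.card ι * ∑' d, F i d := by
  have tsum_eq (j : ι) : ∑' d, F j d = ∑' d, F i d := by
    rw [← ((Equiv.swap i j).arrowCongr (Equiv.refl D)).tsum_eq (F i)]
    refine tsum_congr fun d => ?_
    calc F j d = F (Equiv.swap i j i) d := by rw [Equiv.swap_apply_left]
      _ = F i (d ∘ Equiv.swap i j) := (hF _ _ _).symm
  rw [Summable.tsum_finsetSum fun _ _ => ENNReal.summable]
  simp only [tsum_eq, Finset.sum_const, Finset.card_univ, nsmul_eq_mul]

lemma sum_filter_upper_tail_le {ι M β : Type*} [Fintype ι] [AddCommMonoid M] [PartialOrder M]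
    [IsOrderedAddMonoid M] [CanonicallyOrderedAdd M] [DecidableLE M] [LinearOrder β]
    (v : ι → M) (s : ι → β) (c : M) :
    ∑ i with ∑ j with s i ≤ s j, v j ≤ c, v i ≤ c := by
  set R := Finset.univ.filter fun i => ∑ j with s i ≤ s j, v j ≤ c
  obtain hempty | hne := R.eq_empty_or_nonempty
  · simp [hempty]
  obtain ⟨i, hiR, hmin⟩ := R.exists_min_image s hne
  calc ∑ j ∈ R, v j ≤ ∑ j with s i ≤ s j, v j :=
        Finset.sum_le_sum_of_subset fun j hj => by simpa using hmin j hj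
    _ ≤ c := (Finset.mem_filter.mp hiR).2

section WeightedTest

variable {D : Type*} (q : D → D → ℝ≥0) (f fhat g : D → ℝ≥0) (m : ℕ) (S : D → ℝ)

lemma jointLaw_cons (x : D) (y : Fin m → D) :
    jointLaw f q m (Fin.cons x y : Fin (m + 1) → D) = f x * ∏ k, q (y k) x := by
  have erase_zero : Finset.univ.erase (0 : Fin (m + 1)) = Finset.univ.map (Fin.succEmb m) := by
    rw [Fin.univ_succ, Finset.erase_cons]
    rfl
  simp [jointLaw, erase_zero, Finset.prod_map]

lemma tsum_jointLaw (hq : ∀ d, ∑' e, (q e d : ℝ≥0∞) = 1) :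
    ∑' d, (jointLaw f q m d : ℝ≥0∞) = ∑' x, (f x : ℝ≥0∞) := by
  calc ∑' d, (jointLaw f q m d : ℝ≥0∞)
      = ∑' x, ∑' y : Fin m → D, (f x : ℝ≥0∞) * ∏ k, (q (y k) x : ℝ≥0∞) := by
        rw [← (Fin.consEquiv fun _ => D).tsum_eq, ENNReal.tsum_prod']
        simp [Fin.consEquiv, jointLaw_cons]
    _ = ∑' x, (f x : ℝ≥0∞) := by
        refine tsum_congr fun x => ?_
        rw [ENNReal.tsum_mul_left, tsum_pi_prod_eq_prod_tsum fun _ e => (q e x : ℝ≥0∞)]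
        simp only [hq, Finset.prod_const_one, mul_one]

/-- The weighted p-value of a tuple in which the `i`-th entry, rather than the `0`-th one, plays
the role of the observed data; `pValueAt q fhat m S 0` is `pValue q fhat m S`. -/
def pValueAt (i : Fin (m + 1)) (d : Fin (m + 1) → D) : ℝ≥0 :=
  ∑ j, weight q fhat m j d * (if S (d i) ≤ S (d j) then 1 else 0)

variable {m}

lemma wNum_comp_perm (σ : Equiv.Perm (Fin (m + 1))) (i : Fin (m + 1)) (d : Fin (m + 1) → D) :
    wNum q f m i (d ∘ σ) = wNum q f m (σ i) d := by
  unfold wNum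
  congr 1
  exact Finset.prod_equiv σ (by simp) fun _ _ => rfl

lemma weight_comp_perm (σ : Equiv.Perm (Fin (m + 1))) (i : Fin (m + 1)) (d : Fin (m + 1) → D) :
    weight q f m i (d ∘ σ) = weight q f m (σ i) d := by
  simp only [weight, wNum_comp_perm, Equiv.sum_comp σ fun j => wNum q f m j d]

lemma pValueAt_comp_perm (σ : Equiv.Perm (Fin (m + 1))) (i : Fin (m + 1))
    (d : Fin (m + 1) → D) :
    pValueAt q f m S i (d ∘ σ) = pValueAt q f m S (σ i) d := by
  simp only [pValueAt, weight_comp_perm, Function.comp_apply]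
  exact Equiv.sum_comp σ fun j => weight q f m j d * if S (d (σ i)) ≤ S (d j) then 1 else 0

lemma weight_mul_sum_wNum (i : Fin (m + 1)) (d : Fin (m + 1) → D) :
    weight q f m i d * ∑ j, wNum q f m j d = wNum q f m i d :=
  div_mul_cancel_of_imp fun hzero => Finset.sum_eq_zero_iff.mp hzero i (Finset.mem_univ i)

lemma pValueAt_mul_sum_wNum (i : Fin (m + 1)) (d : Fin (m + 1) → D) :
    pValueAt q f m S i d * ∑ j, wNum q f m j d =
      ∑ j with S (d i) ≤ S (d j), wNum q f m j d := by
  simp only [pValueAt, Finset.sum_mul, Finset.sum_filter, mul_ite, mul_one, mul_zero,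
    ite_mul, zero_mul, weight_mul_sum_wNum]

lemma sum_wNum_filter_pValueAt_le (α : ℝ≥0) (d : Fin (m + 1) → D) :
    ∑ i with pValueAt q f m S i d ≤ α, wNum q f m i d ≤ α * ∑ i, wNum q f m i d := by
  refine le_trans (Finset.sum_le_sum_of_subset ?_)
    (sum_filter_upper_tail_le (fun i => wNum q f m i d) (fun i => S (d i)) _)
  refine Finset.monotone_filter_right _ fun i _ hi => ?_
  rw [← pValueAt_mul_sum_wNum]
  gcongr

variable {q f fhat g}

-- If `q (d 0) (d i) = 0` both sides vanish, so `g (d i)` may be replaced by `g (d 0)`.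
lemma wNum_eq_mul_wNum (hfg : ∀ d, f d = g d * fhat d)
    (hg : ∀ d e, 0 < q e d → g e = g d) (i : Fin (m + 1)) (d : Fin (m + 1) → D) :
    wNum q f m i d = g (d 0) * wNum q fhat m i d := by
  unfold wNum
  obtain rfl | hi := eq_or_ne i 0
  · rw [hfg, mul_assoc]
  obtain hzero | hpos := eq_zero_or_pos (q (d 0) (d i))
  · rw [Finset.prod_eq_zero (Finset.mem_erase.mpr ⟨hi.symm, Finset.mem_univ 0⟩) hzero,
      mul_zero, mul_zero, mul_zero]
  · rw [hg _ _ hpos, hfg, mul_assoc]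

lemma sum_wNum_filter_pValueAt_le_of_factor (hfg : ∀ d, f d = g d * fhat d)
    (hg : ∀ d e, 0 < q e d → g e = g d) (α : ℝ≥0) (d : Fin (m + 1) → D) :
    ∑ i with pValueAt q fhat m S i d ≤ α, wNum q f m i d ≤ α * ∑ i, wNum q f m i d := by
  simp only [wNum_eq_mul_wNum hfg hg, ← Finset.mul_sum, mul_left_comm α]
  gcongr
  exact sum_wNum_filter_pValueAt_le q fhat S α d

lemma tsum_jointLaw_pValue_le (hfg : ∀ d, f d = g d * fhat d)
    (hg : ∀ d e, 0 < q e d → g e = g d) (α : ℝ≥0) :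
    ∑' d, ((if pValue q fhat m S d ≤ α then jointLaw f q m d else 0 : ℝ≥0) : ℝ≥0∞) ≤
      α * ∑' d, (jointLaw f q m d : ℝ≥0∞) := by
  have average_reject := tsum_sum_eq_card_mul_tsum_of_equivariant
    (fun i d => ((if pValueAt q fhat m S i d ≤ α then wNum q f m i d else 0 : ℝ≥0) : ℝ≥0∞))
    (fun σ i d => by rw [pValueAt_comp_perm, wNum_comp_perm]) 0
  have average_total := tsum_sum_eq_card_mul_tsum_of_equivariant
    (fun i d => (wNum q f m i d : ℝ≥0∞)) (fun σ i d => by rw [wNum_comp_perm]) 0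
  have pointwise (d : Fin (m + 1) → D) :
      ∑ i, ((if pValueAt q fhat m S i d ≤ α then wNum q f m i d else 0 : ℝ≥0) : ℝ≥0∞) ≤
        α * ∑ i, (wNum q f m i d : ℝ≥0∞) := by
    have := sum_wNum_filter_pValueAt_le_of_factor S hfg hg α d
    rw [Finset.sum_filter] at this
    exact_mod_cast this
  refine (ENNReal.mul_le_mul_iff_right (a := (Fintype.card (Fin (m + 1)) : ℝ≥0∞)) (by simp)
    (ENNReal.natCast_ne_top _)).mp ?_
  calc _ = ∑' d, ∑ i, ((if pValueAt q fhat m S i d ≤ α then wNum q f m i d else 0 : ℝ≥0) : ℝ≥0∞) :=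
        average_reject.symm
    _ ≤ ∑' d, α * ∑ i, (wNum q f m i d : ℝ≥0∞) := ENNReal.tsum_le_tsum pointwise
    _ = α * (Fintype.card (Fin (m + 1)) * ∑' d, (jointLaw f q m d : ℝ≥0∞)) := by
        rw [ENNReal.tsum_mul_left, average_total]
        rfl
    _ = Fintype.card (Fin (m + 1)) * (α * ∑' d, (jointLaw f q m d : ℝ≥0∞)) := mul_left_comm _ _ _

end WeightedTest

theorem nonstationarity_test_valid_general {D : Type*} {q : D → D → ℝ≥0} {f fhat g : D → ℝ≥0}
    {m : ℕ} (S : D → ℝ) (hfg : ∀ d, f d = g d * fhat d)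
    (hg : ∀ d e, 0 < q e d → g e = g d) (hf : ∑' d, f d = 1) (hq : ∀ d, ∑' e, q e d = 1)
    (α : ℝ≥0) :
    ∑' d, (if pValue q fhat m S d ≤ α then jointLaw f q m d else 0) ≤ α := by
  have total : ∑' d, (jointLaw f q m d : ℝ≥0∞) = 1 := by
    rw [tsum_jointLaw q f m fun d => tsum_coe_eq_one_of_tsum_eq_one (hq d),
      tsum_coe_eq_one_of_tsum_eq_one hf]
  have reject_le := tsum_jointLaw_pValue_le (m := m) S hfg hg α
  rw [total, mul_one] at reject_le
  have summable_reject := ENNReal.tsum_coe_ne_top_iff_summable.mp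
    (ne_top_of_le_ne_top ENNReal.coe_ne_top reject_le)
  rwa [← ENNReal.coe_tsum summable_reject, ENNReal.coe_le_coe] at reject_le

section Trajectory

variable {T : ℕ} (pC : C → ℝ≥0) (r : Y → C → X → ℝ≥0)

/-- The factor `∏ t, pC(c_t) · r(y_t; c_t, x_t)` of the likelihood of a trajectory contributed by
the environment, which the assignment algorithm does not enter. -/
def environmentLik (d : Fin T → C × X × Y) : ℝ≥0 :=
  ∏ t, pC (d t).1 * r (d t).2.2 (d t).1 (d t).2.1

lemma statTrajLaw_eq_environmentLik_mul_assignLik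
    (a : (t : Fin T) → X → C → (Fin (t : ℕ) → C × X × Y) → ℝ≥0) (d : Fin T → C × X × Y) :
    statTrajLaw pC a r d = environmentLik pC r d * assignLik a d := by
  simp only [statTrajLaw, environmentLik, assignLik, ← Finset.prod_mul_distrib, mul_right_comm]

lemma environmentLik_eq_of_perm {d e : Fin T → C × X × Y}
    (h : ∃ π : Equiv.Perm (Fin T), ∀ t, e t = d (π t)) :
    environmentLik pC r e = environmentLik pC r d := by
  obtain ⟨π, hπ⟩ := h
  simp only [environmentLik, hπ]
  exact Equiv.prod_comp π fun t => pC (d t).1 * r (d t).2.2 (d t).1 (d t).2.1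

end Trajectory

/-- **(Validity of the non-stationarity test / marginal conformal coverage in a
`C`-stationary strongly non-reactive environment.)** With `f̂ = assignLik a` and
a resampling distribution `q` supported on permutations of the observed
trajectory, the weighted MC randomization p-value is valid under `H₀^S`. -/
theorem nonstationarity_test_valid
    [Countable C] [Countable X] [Countable Y]
    (T : ℕ) (hT : 1 ≤ T)
    (pC : C → ℝ≥0)
    (a : (t : Fin T) → X → C → (Fin (t : ℕ) → C × X × Y) → ℝ≥0)
    (r : Y → C → X → ℝ≥0)
    (q : (Fin T → C × X × Y) → (Fin T → C × X × Y) → ℝ≥0)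
    (m : ℕ) (hm : 1 ≤ m)
    (S : (Fin T → C × X × Y) → ℝ)
    (hf : ∑' d, statTrajLaw pC a r d = 1)
    (hq : ∀ d, ∑' e, q e d = 1)
    (hperm : ∀ d dtil, 0 < q dtil d →
      ∃ π : Equiv.Perm (Fin T), ∀ t, dtil t = d (π t)) :
    ∀ α : ℝ≥0, α ≤ 1 →
      (∑' dd : Fin (m + 1) → (Fin T → C × X × Y),
        if pValue q (assignLik a) m S dd ≤ α then
          jointLaw (statTrajLaw pC a r) q m dd
        else 0) ≤ α :=
  fun α _ => nonstationarity_test_valid_general S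
    (statTrajLaw_eq_environmentLik_mul_assignLik pC r a)
    (fun d e hde => environmentLik_eq_of_perm pC r (hperm d e hde)) hf hq α
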